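/- arXiv:2507.20708 — 4 statements merged into one kernel-verified Lean document; each statement's English description precedes it below -/
import Mathlib

section
/- Let n ≥ 1, k ≥ 1 and φ₁,…,φₙ ∈ ℝ^k. Assume the empirical covariance matrix C = (1/n)Σᵢφᵢφᵢᵀ − φ̄φ̄ᵀ (with φ̄ = (1/n)Σᵢφᵢ) is invertible, and that t ∈ ℝ^k can be written as t = Σᵢ wᵢφᵢ with weights wᵢ > 0, Σᵢ wᵢ = 1. Let ξ(t) be the unique global minimizer of H(ξ) = log Z(ξ) − ⟨ξ,t⟩ and define the probability vector q ∈ ℝⁿ by qᵢ = λᵢ(ξ(t))/n. Then q satisfies the constraint Σᵢ qᵢφᵢ = t, and for every probability vector p ∈ ℝⁿ with Σᵢ pᵢφᵢ = t one has KL(p) ≥ KL(q), with equality if and only if p = q. In other words, q is the unique minimizer of the Kullback–Leibler divergence to the uniform vector among all probability vectors satisfying the linear constraint Σᵢ pᵢφᵢ = t. -/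
/-!
At a minimizer `ξ` of `log Z - t`, the directional derivatives `∑ i, qᵢ ⟨φᵢ, v⟩ - ⟨t, v⟩` vanish, so
the Gibbs vector `q` has moment `t`. The log-density of `q` is an affine function of the features
`φᵢ`, hence has the same mean under all `p` with moment `t`. This gives the Pythagorean identity
`KL(p ‖ m) = KL(p ‖ q) + KL(q ‖ m)`, and Gibbs' inequality for `KL(p ‖ q)` concludes.
-/

open Finset InformationTheory

section RelativeEntropy

variable {ι : Type*} [Fintype ι] {p q : ι → ℝ}

/-- The Kullback–Leibler divergence `KL(p ‖ q)` of finite vectors of real weights, as a real number.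
It is meaningful when `p i ≠ 0` implies `q i ≠ 0`, since `log (p i / 0) = 0`. -/
noncomputable def relEntropy (p q : ι → ℝ) : ℝ := ∑ i, p i * Real.log (p i / q i)

theorem relEntropy_const_one_div (p : ι → ℝ) (c : ℝ) :
    relEntropy p (fun _ ↦ 1 / c) = ∑ i, p i * Real.log (c * p i) := by
  simp only [relEntropy, div_div_eq_mul_div, div_one, mul_comm c]

theorem relEntropy_self (p : ι → ℝ) : relEntropy p p = 0 :=
  sum_eq_zero fun i _ ↦ by by_cases h : p i = 0 <;> simp [h]

theorem relEntropy_eq_sum_mul_klFun (hq : ∀ i, q i ≠ 0) (hpq : ∑ i, p i = ∑ i, q i) :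
    relEntropy p q = ∑ i, q i * klFun (p i / q i) := by
  have mul_klFun (i : ι) :
      q i * klFun (p i / q i) = p i * Real.log (p i / q i) + (q i - p i) := by
    rw [klFun_apply]
    field_simp [hq i]
    ring
  simp only [mul_klFun, sum_add_distrib, sum_sub_distrib, hpq, sub_self, add_zero, relEntropy]

theorem relEntropy_nonneg (hp : ∀ i, 0 ≤ p i) (hq : ∀ i, 0 < q i) (hpq : ∑ i, p i = ∑ i, q i) :
    0 ≤ relEntropy p q := by
  rw [relEntropy_eq_sum_mul_klFun (fun i ↦ (hq i).ne') hpq]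
  exact sum_nonneg fun i _ ↦ mul_nonneg (hq i).le (klFun_nonneg (div_nonneg (hp i) (hq i).le))

theorem relEntropy_eq_zero_iff (hp : ∀ i, 0 ≤ p i) (hq : ∀ i, 0 < q i)
    (hpq : ∑ i, p i = ∑ i, q i) : relEntropy p q = 0 ↔ p = q := by
  have hdiv (i : ι) : 0 ≤ p i / q i := div_nonneg (hp i) (hq i).le
  rw [relEntropy_eq_sum_mul_klFun (fun i ↦ (hq i).ne') hpq,
    sum_eq_zero_iff_of_nonneg fun i _ ↦ mul_nonneg (hq i).le (klFun_nonneg (hdiv i)), funext_iff]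
  simp only [mem_univ, true_imp_iff, mul_eq_zero, (hq _).ne', false_or,
    klFun_eq_zero_iff (hdiv _), div_eq_one_iff_eq (hq _).ne']

end RelativeEntropy

section Gibbs

variable {ι V : Type*} [Fintype ι] [AddCommGroup V] [Module ℝ V] {m : ι → ℝ}

/-- The partition function `Z(ξ)` of the exponential family with base weights `m` and features `φ`.
The features are linear functionals of the parameter `ξ`. -/
noncomputable def partitionFunction (m : ι → ℝ) (φ : ι → Module.Dual ℝ V) (ξ : V) : ℝ :=
  ∑ i, m i * Real.exp (φ i ξ)

/-- The member with parameter `ξ` of the exponential family with base weights `m` and features `φ`.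
The base weight is included: for `m i = 1 / n` this is the Gibbs weight `λᵢ(ξ)` divided by `n`. -/
noncomputable def gibbsVector (m : ι → ℝ) (φ : ι → Module.Dual ℝ V) (ξ : V) (i : ι) : ℝ :=
  m i * Real.exp (φ i ξ - Real.log (partitionFunction m φ ξ))

theorem partitionFunction_pos [Nonempty ι] (hm : ∀ i, 0 < m i) (φ : ι → Module.Dual ℝ V) (ξ : V) :
    0 < partitionFunction m φ ξ :=
  sum_pos (fun i _ ↦ mul_pos (hm i) (Real.exp_pos _)) univ_nonempty

theorem gibbsVector_pos (hm : ∀ i, 0 < m i) (φ : ι → Module.Dual ℝ V) (ξ : V) (i : ι) :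
    0 < gibbsVector m φ ξ i :=
  mul_pos (hm i) (Real.exp_pos _)

theorem gibbsVector_eq_div [Nonempty ι] (hm : ∀ i, 0 < m i) (φ : ι → Module.Dual ℝ V) (ξ : V)
    (i : ι) : gibbsVector m φ ξ i = m i * Real.exp (φ i ξ) / partitionFunction m φ ξ := by
  rw [gibbsVector, Real.exp_sub, Real.exp_log (partitionFunction_pos hm φ ξ), mul_div_assoc]

theorem sum_gibbsVector [Nonempty ι] (hm : ∀ i, 0 < m i) (φ : ι → Module.Dual ℝ V) (ξ : V) :
    ∑ i, gibbsVector m φ ξ i = 1 := by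
  simp only [gibbsVector_eq_div hm, ← sum_div]
  exact div_self (partitionFunction_pos hm φ ξ).ne'

theorem hasLineDerivAt_partitionFunction (m : ι → ℝ) (φ : ι → Module.Dual ℝ V) (ξ v : V) :
    HasLineDerivAt ℝ (partitionFunction m φ) (∑ i, m i * Real.exp (φ i ξ) * φ i v) ξ v := by
  have hφ (i : ι) : HasDerivAt (fun s : ℝ ↦ φ i (ξ + s • v)) (φ i v) 0 := by
    simpa using ((hasDerivAt_id (0 : ℝ)).mul_const (φ i v)).const_add (φ i ξ)
  simpa [HasLineDerivAt, partitionFunction, mul_assoc] using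
    HasDerivAt.fun_sum fun i (_ : i ∈ univ) ↦ (hφ i).exp.const_mul (m i)

theorem hasLineDerivAt_log_partitionFunction [Nonempty ι] (hm : ∀ i, 0 < m i)
    (φ : ι → Module.Dual ℝ V) (ξ v : V) :
    HasLineDerivAt ℝ (fun η ↦ Real.log (partitionFunction m φ η))
      (∑ i, gibbsVector m φ ξ i * φ i v) ξ v := by
  have hZ := (hasLineDerivAt_partitionFunction m φ ξ v).log
    (by simpa using (partitionFunction_pos hm φ ξ).ne')
  simpa [HasLineDerivAt, gibbsVector_eq_div hm, sum_div, div_mul_eq_mul_div] using hZ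

theorem sum_gibbsVector_smul_eq_of_isMinOn [Nonempty ι] (hm : ∀ i, 0 < m i)
    {φ : ι → Module.Dual ℝ V} {t : Module.Dual ℝ V} {ξ : V}
    (hξ : IsMinOn (fun η ↦ Real.log (partitionFunction m φ η) - t η) Set.univ ξ) :
    ∑ i, gibbsVector m φ ξ i • φ i = t := by
  ext v
  have ht : HasLineDerivAt ℝ t (t v) ξ v := by
    simpa [HasLineDerivAt] using ((hasDerivAt_id (0 : ℝ)).mul_const (t v)).const_add (t ξ)
  have hH := hξ.hasLineDerivAt_eq_zero
    ((hasLineDerivAt_log_partitionFunction hm φ ξ v).fun_sub ht) (by simp)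
  simpa using sub_eq_zero.mp hH

theorem relEntropy_eq_relEntropy_gibbsVector_add (hm : ∀ i, m i ≠ 0) (φ : ι → Module.Dual ℝ V)
    (ξ : V) {p : ι → ℝ} (hp : ∑ i, p i = 1) :
    relEntropy p m = relEntropy p (gibbsVector m φ ξ) +
      ((∑ i, p i • φ i) ξ - Real.log (partitionFunction m φ ξ)) := by
  set logZ := Real.log (partitionFunction m φ ξ)
  have log_ratio (i : ι) : p i * Real.log (p i / m i) =
      p i * Real.log (p i / gibbsVector m φ ξ i) + (p i * φ i ξ - p i * logZ) := by
    rcases eq_or_ne (p i) 0 with h | h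
    · simp [h]
    · rw [gibbsVector, ← div_div, Real.log_div (div_ne_zero h (hm i)) (Real.exp_ne_zero _),
        Real.log_exp]
      ring
  simp only [relEntropy, log_ratio, sum_add_distrib, sum_sub_distrib, ← sum_mul, hp, one_mul,
    LinearMap.sum_apply, LinearMap.smul_apply, smul_eq_mul]

theorem relEntropy_pythagorean [Nonempty ι] (hm : ∀ i, 0 < m i) {φ : ι → Module.Dual ℝ V} {ξ : V}
    {p : ι → ℝ} (hp : ∑ i, p i = 1) (hpφ : ∑ i, p i • φ i = ∑ i, gibbsVector m φ ξ i • φ i) :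
    relEntropy p m = relEntropy p (gibbsVector m φ ξ) + relEntropy (gibbsVector m φ ξ) m := by
  have hm0 (i : ι) : m i ≠ 0 := (hm i).ne'
  rw [relEntropy_eq_relEntropy_gibbsVector_add hm0 φ ξ hp, hpφ,
    relEntropy_eq_relEntropy_gibbsVector_add hm0 φ ξ (sum_gibbsVector hm φ ξ), relEntropy_self,
    zero_add]

theorem entropic_projection_characterization_general [Nonempty ι] (hm : ∀ i, 0 < m i)
    {φ : ι → Module.Dual ℝ V} {t : Module.Dual ℝ V} {ξ : V}
    (hξ : IsMinOn (fun η ↦ Real.log (partitionFunction m φ η) - t η) Set.univ ξ) :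
    ∑ i, gibbsVector m φ ξ i • φ i = t ∧
      ∀ p : ι → ℝ, (∀ i, 0 ≤ p i) → ∑ i, p i = 1 → ∑ i, p i • φ i = t →
        relEntropy (gibbsVector m φ ξ) m ≤ relEntropy p m ∧
          (relEntropy p m = relEntropy (gibbsVector m φ ξ) m ↔ p = gibbsVector m φ ξ) := by
  have hq := sum_gibbsVector_smul_eq_of_isMinOn hm hξ
  refine ⟨hq, fun p hp hp1 hpt ↦ ?_⟩
  have hsum : ∑ i, p i = ∑ i, gibbsVector m φ ξ i := hp1.trans (sum_gibbsVector hm φ ξ).symm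
  have hpos := gibbsVector_pos hm φ ξ
  rw [relEntropy_pythagorean hm hp1 (hpt.trans hq.symm), le_add_iff_nonneg_left, add_eq_right]
  exact ⟨relEntropy_nonneg hp hpos hsum, relEntropy_eq_zero_iff hp hpos hsum⟩

end Gibbs

section DotProduct

variable {ι κ : Type*} [Fintype ι] [Fintype κ] [DecidableEq κ]

theorem partitionFunction_const_dotProductEquiv (c : ℝ) (φ : ι → κ → ℝ) (ξ : κ → ℝ) :
    partitionFunction (fun _ ↦ c) (fun i ↦ dotProductEquiv ℝ κ (φ i)) ξ =
      c * ∑ i, Real.exp (∑ j, φ i j * ξ j) := by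
  simp only [partitionFunction, dotProductEquiv_apply_apply, dotProduct, mul_sum]

theorem gibbsVector_one_div_dotProductEquiv (c : ℝ) (φ : ι → κ → ℝ) (ξ : κ → ℝ) :
    gibbsVector (fun _ ↦ 1 / c) (fun i ↦ dotProductEquiv ℝ κ (φ i)) ξ = fun i ↦
      Real.exp ((∑ j, ξ j * φ i j) -
        Real.log ((1 / c) * ∑ a, Real.exp (∑ j, φ a j * ξ j))) / c := by
  ext i
  rw [gibbsVector, partitionFunction_const_dotProductEquiv, dotProductEquiv_apply_apply,
    dotProduct_comm, dotProduct, div_mul_eq_mul_div _ c (Real.exp _), one_mul]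

theorem sum_smul_dotProductEquiv_eq_iff (p : ι → ℝ) (φ : ι → κ → ℝ) (t : κ → ℝ) :
    ∑ i, p i • dotProductEquiv ℝ κ (φ i) = dotProductEquiv ℝ κ t ↔
      ∀ j, ∑ i, p i * φ i j = t j := by
  simp only [← map_smul, ← map_sum, EmbeddingLike.apply_eq_iff_eq, funext_iff, Finset.sum_apply,
    Pi.smul_apply, smul_eq_mul]

end DotProduct

/-- under invertibility of the empirical covariance matrix and
representability of `t` as a strictly positive convex combination of the `φᵢ`,
if `ξt` is the global minimizer of `H(ξ) = log Z(ξ) − ⟨ξ,t⟩` and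
`qᵢ = λᵢ(ξt)/n` (with Gibbs weights `λᵢ(ξ) = exp(⟨ξ,φᵢ⟩ − log Z(ξ))`), then
`q` satisfies the linear constraint `Σᵢ qᵢφᵢ = t`, and `q` is the unique minimizer of
the Kullback–Leibler divergence `KL(p) = Σᵢ pᵢ log(n pᵢ)` to the uniform vector among
all probability vectors `p` with `Σᵢ pᵢφᵢ = t`. -/
theorem entropic_projection_characterization (n k : ℕ) (hn : 1 ≤ n) (hk : 1 ≤ k)
    (φ : Fin n → Fin k → ℝ) (t : Fin k → ℝ)
    (hC : IsUnit (Matrix.of (fun i j : Fin k =>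
      (1 / n : ℝ) * ∑ a, φ a i * φ a j -
        ((1 / n : ℝ) * ∑ a, φ a i) * ((1 / n : ℝ) * ∑ a, φ a j))))
    (w : Fin n → ℝ) (hw : ∀ i, 0 < w i) (hw1 : ∑ i, w i = 1)
    (ht : ∀ j, t j = ∑ i, w i * φ i j)
    (ξt : Fin k → ℝ)
    (hξt : ∀ ξ : Fin k → ℝ,
      (Real.log ((1 / n : ℝ) * ∑ a, Real.exp (∑ j, φ a j * ξt j)) - ∑ j, ξt j * t j)
        ≤ (Real.log ((1 / n : ℝ) * ∑ a, Real.exp (∑ j, φ a j * ξ j)) - ∑ j, ξ j * t j))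
    (q : Fin n → ℝ)
    (hq : ∀ i, q i = Real.exp ((∑ j, ξt j * φ i j) -
      Real.log ((1 / n : ℝ) * ∑ a, Real.exp (∑ j, φ a j * ξt j))) / n) :
    (∀ j, ∑ i, q i * φ i j = t j) ∧
      ∀ p : Fin n → ℝ, (∀ i, 0 ≤ p i) → (∑ i, p i = 1) →
        (∀ j, ∑ i, p i * φ i j = t j) →
        (∑ i, q i * Real.log (n * q i)) ≤ (∑ i, p i * Real.log (n * p i)) ∧
          ((∑ i, p i * Real.log (n * p i)) = (∑ i, q i * Real.log (n * q i)) ↔ p = q) := by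
  obtain rfl := funext hq
  have : Nonempty (Fin n) := Fin.pos_iff_nonempty.mp hn
  have hm (_ : Fin n) : (0 : ℝ) < 1 / n := one_div_pos.mpr (Nat.cast_pos.mpr hn)
  have projection := entropic_projection_characterization_general hm
    (φ := fun i ↦ dotProductEquiv ℝ (Fin k) (φ i)) (t := dotProductEquiv ℝ (Fin k) t) (ξ := ξt)
  simp only [isMinOn_univ_iff, partitionFunction_const_dotProductEquiv,
    dotProductEquiv_apply_apply, dotProduct_comm t, gibbsVector_one_div_dotProductEquiv,
    sum_smul_dotProductEquiv_eq_iff, relEntropy_const_one_div] at projection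
  exact projection hξt
end

section
/- Let λ₀, λ₁, n₀, n₁, Δ be strictly positive real numbers, and set δ = λ₁ / (1 + (n₁/(n₀·Δ))·(1 + λ₀/λ₁)). Then 0 < δ < λ₁ and ((λ₀ + δ)/n₀)·(n₁/(λ₁ − δ)) = (λ₀/n₀)·(n₁/λ₁) + Δ. That is, in the balanced case δ₀ = δ₁ = δ, adding δ to the numerator count and subtracting δ from the denominator count raises the Disparate Impact by exactly Δ. -/
/-! Put `K = (n₁ / (n₀ Δ)) (1 + λ₀ / λ₁)`. The shift `δ = λ₁ / (1 + K)` splits `λ₁` so that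
`δ / (λ₁ - δ) = 1 / K`, while transferring `δ` raises the Disparate Impact by
`(n₁ / n₀) (1 + λ₀ / λ₁) · δ / (λ₁ - δ) = Δ K · (1 / K)`. -/

section Field

variable {𝕜 : Type*} [Field 𝕜]

/-- The Disparate Impact `(l₀ / n₀) / (l₁ / n₁)` of groups of sizes `n₀`, `n₁` with `l₀`, `l₁`
positive predictions, the outer division being encoded as multiplication by the inverse rate. -/
def disparateImpact (n₀ n₁ l₀ l₁ : 𝕜) : 𝕜 :=
  l₀ / n₀ * (n₁ / l₁)

theorem disparateImpact_add_sub (n₀ n₁ l₀ d₀ : 𝕜) {l₁ d₁ : 𝕜} (hl₁ : l₁ ≠ 0)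
    (hd₁ : l₁ - d₁ ≠ 0) :
    disparateImpact n₀ n₁ (l₀ + d₀) (l₁ - d₁) =
      disparateImpact n₀ n₁ l₀ l₁ + n₁ / n₀ * ((d₀ + l₀ / l₁ * d₁) / (l₁ - d₁)) := by
  have ratio : (l₀ + d₀) / (l₁ - d₁) = l₀ / l₁ + (d₀ + l₀ / l₁ * d₁) / (l₁ - d₁) := by
    field_simp
    ring
  calc disparateImpact n₀ n₁ (l₀ + d₀) (l₁ - d₁)
      = n₁ / n₀ * ((l₀ + d₀) / (l₁ - d₁)) := by rw [disparateImpact]; ring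
    _ = n₁ / n₀ * (l₀ / l₁ + (d₀ + l₀ / l₁ * d₁) / (l₁ - d₁)) := by rw [ratio]
    _ = _ := by rw [disparateImpact]; ring

theorem disparateImpact_transfer (n₀ n₁ l₀ : 𝕜) {l₁ d : 𝕜} (hl₁ : l₁ ≠ 0) (hd : l₁ - d ≠ 0) :
    disparateImpact n₀ n₁ (l₀ + d) (l₁ - d) =
      disparateImpact n₀ n₁ l₀ l₁ + n₁ / n₀ * (1 + l₀ / l₁) * (d / (l₁ - d)) := by
  rw [disparateImpact_add_sub n₀ n₁ l₀ d hl₁ hd]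
  ring

theorem div_one_add_div_sub_self {a k : 𝕜} (ha : a ≠ 0) (hk : 1 + k ≠ 0) :
    a / (1 + k) / (a - a / (1 + k)) = k⁻¹ := by
  have remainder : a - a / (1 + k) = a / (1 + k) * k := by
    field_simp
    ring
  rw [remainder, div_mul_cancel_left₀ (div_ne_zero ha hk)]

end Field

theorem balanced_fairwashing_general {𝕜 : Type*} [Field 𝕜] [LinearOrder 𝕜]
    [IsStrictOrderedRing 𝕜] {l₀ l₁ n₀ n₁ Δ δ : 𝕜} (hl : 0 < l₀ + l₁) (hl₁ : 0 < l₁)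
    (hn₀ : 0 < n₀) (hn₁ : 0 < n₁) (hΔ : 0 < Δ)
    (hδ : δ = l₁ / (1 + n₁ / (n₀ * Δ) * (1 + l₀ / l₁))) :
    0 < δ ∧ δ < l₁ ∧
      disparateImpact n₀ n₁ (l₀ + δ) (l₁ - δ) = disparateImpact n₀ n₁ l₀ l₁ + Δ := by
  have hratio : 0 < 1 + l₀ / l₁ := by
    rw [one_add_div hl₁.ne', add_comm]
    exact div_pos hl hl₁
  set K := n₁ / (n₀ * Δ) * (1 + l₀ / l₁) with hK
  have hK_pos : 0 < K := by positivity
  have hδ_pos : 0 < δ := hδ ▸ by positivity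
  have hδ_lt : δ < l₁ := hδ ▸ div_lt_self hl₁ (lt_add_of_pos_right 1 hK_pos)
  have hsplit : δ / (l₁ - δ) = K⁻¹ :=
    hδ ▸ div_one_add_div_sub_self hl₁.ne' (by positivity)
  have hgain : n₁ / n₀ * (1 + l₀ / l₁) = Δ * K := by
    rw [hK]
    field_simp
  refine ⟨hδ_pos, hδ_lt, ?_⟩
  rw [disparateImpact_transfer n₀ n₁ l₀ hl₁.ne' (sub_pos.mpr hδ_lt).ne', hsplit, hgain,
    mul_inv_cancel_right₀ hK_pos.ne']

/-- balanced case: for strictly positive reals `λ₀ λ₁ n₀ n₁ Δ`, with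
`δ = λ₁ / (1 + (n₁/(n₀·Δ))·(1 + λ₀/λ₁))`, one has `0 < δ < λ₁` and the Disparate
Impact increases by exactly `Δ`. -/
theorem balanced_fairwashing (lam0 lam1 n0 n1 Δ δ : ℝ)
    (hlam0 : 0 < lam0) (hlam1 : 0 < lam1) (hn0 : 0 < n0) (hn1 : 0 < n1) (hΔ : 0 < Δ)
    (hδ : δ = lam1 / (1 + (n1 / (n0 * Δ)) * (1 + lam0 / lam1))) :
    0 < δ ∧ δ < lam1 ∧
      ((lam0 + δ) / n0) * (n1 / (lam1 - δ)) = (lam0 / n0) * (n1 / lam1) + Δ :=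
  balanced_fairwashing_general (add_pos hlam0 hlam1) hlam1 hn0 hn1 hΔ hδ
end

section
/- Let E be a compact subset of ℝ^d, Q a probability measure on E, Φ : E → ℝ^k a continuous map, λ ∈ ℝ^k and t ∈ ℝ^k. Suppose T : E → E is a measurable map such that for every y ∈ E, ‖T(y) − y‖² − ⟨λ, Φ(T(y))⟩ = inf_{x ∈ E} (‖x − y‖² − ⟨λ, Φ(x)⟩), and suppose ∫_E Φ(T(y)) dQ(y) = t. Then the pushforward measure T#Q satisfies ∫_E Φ d(T#Q) = t, its transport cost satisfies TC(Q, T#Q) = ∫_E ‖T(y) − y‖² dQ(y), and T#Q minimizes the transport cost from Q over the constraint set: for every probability measure P on E with ∫_E Φ dP = t, TC(Q, P) ≥ TC(Q, T#Q). -/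
open MeasureTheory

/-- The squared transport cost between two measures on `α` with cost function `cost`:
the infimum over all couplings `γ` (measures on `α × α` with the prescribed marginals)
of `∫ cost(x,y) dγ(x,y)`. -/
noncomputable def transportCost {α : Type*} [MeasurableSpace α] (cost : α → α → ℝ)
    (μ ν : Measure α) : ℝ :=
  sInf ((fun γ : Measure (α × α) => ∫ p, cost p.1 p.2 ∂γ) ''
    {γ | γ.map Prod.fst = μ ∧ γ.map Prod.snd = ν})

/-!
Idea: the potential `φ x = ∑ j, λ j * Φ x j` acts as a Lagrange multiplier. Optimality of `T` says
`cost y (T y) - φ (T y) ≤ cost y x - φ x` for all `x`; integrating against any coupling of `Q` and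
`P` gives `∫ cost y (T y) dQ - ∫ φ d(T#Q) ≤ ∫ cost dγ - ∫ φ dP`, and both integrals of `φ` equal
`⟨λ, t⟩`. With `P = T#Q` the bound is attained by the coupling carried by the graph of `T`.
-/

/-- A coupling of `μ` and `ν`: a measure on the product whose marginals are `μ` and `ν`. The
marginal conditions are stated through `MeasurePreserving` so that integrals of functions of one
coordinate transfer directly. -/
structure IsCoupling {α β : Type*} [MeasurableSpace α] [MeasurableSpace β]
    (γ : Measure (α × β)) (μ : Measure α) (ν : Measure β) : Prop where
  fst : MeasurePreserving Prod.fst γ μ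
  snd : MeasurePreserving Prod.snd γ ν

lemma integral_comp_of_measurePreserving {α β G : Type*} [MeasurableSpace α] [MeasurableSpace β]
    [NormedAddCommGroup G] [NormedSpace ℝ G] {μ : Measure α} {ν : Measure β} {g : α → β}
    (hg : MeasurePreserving g μ ν) {f : β → G} (hf : AEStronglyMeasurable f ν) :
    ∫ x, f (g x) ∂μ = ∫ y, f y ∂ν := by
  rw [← hg.map_eq] at hf ⊢
  exact (integral_map hg.aemeasurable hf).symm

lemma integral_sum_const_mul {α ι : Type*} [MeasurableSpace α] [Fintype ι] {μ : Measure α}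
    {f : α → ι → ℝ} (lam : ι → ℝ) (hf : ∀ j, Integrable (fun x => f x j) μ) :
    ∫ x, ∑ j, lam j * f x j ∂μ = ∑ j, lam j * ∫ x, f x j ∂μ := by
  rw [integral_finsetSum _ fun j _ => (hf j).const_mul (lam j)]
  simp_rw [integral_const_mul]

namespace IsCoupling

variable {α β : Type*} [MeasurableSpace α] [MeasurableSpace β] {γ : Measure (α × β)}
  {μ : Measure α} {ν : Measure β} {cost : α → β → ℝ} {T : α → β}

lemma prod [IsProbabilityMeasure μ] [IsProbabilityMeasure ν] : IsCoupling (μ.prod ν) μ ν :=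
  ⟨measurePreserving_fst, measurePreserving_snd⟩

lemma graph (hT : AEMeasurable T μ) : IsCoupling (μ.map fun x => (x, T x)) μ (μ.map T) where
  fst := ⟨measurable_fst, (Measure.fst_map_prodMk₀ hT).trans Measure.map_id⟩
  snd := ⟨measurable_snd, Measure.snd_map_prodMk₀ aemeasurable_id⟩

lemma integrable_of_norm_le_add (hγ : IsCoupling γ μ ν)
    (hcost : Measurable fun p : α × β => cost p.1 p.2) {a : α → ℝ} {b : β → ℝ}
    (hle : ∀ x y, ‖cost x y‖ ≤ a x + b y) (ha : Integrable a μ) (hb : Integrable b ν) :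
    Integrable (fun p => cost p.1 p.2) γ :=
  ((hγ.fst.integrable_comp_of_integrable ha).add (hγ.snd.integrable_comp_of_integrable hb)).mono'
    hcost.aestronglyMeasurable (.of_forall fun p => hle p.1 p.2)

lemma integral_cost_comp_le_integral_cost (hγ : IsCoupling γ μ ν) {φ : β → ℝ}
    (hTopt : ∀ᵐ x ∂μ, ∀ y, cost x (T x) - φ (T x) ≤ cost x y - φ y)
    (hcost : Integrable (fun p => cost p.1 p.2) γ)
    (hcostT : Integrable (fun x => cost x (T x)) μ)
    (hφT : Integrable (fun x => φ (T x)) μ) (hφ : Integrable φ ν)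
    (hle : ∫ x, φ (T x) ∂μ ≤ ∫ y, φ y ∂ν) :
    ∫ x, cost x (T x) ∂μ ≤ ∫ p, cost p.1 p.2 ∂γ := by
  have hreduced : Integrable (fun x => cost x (T x) - φ (T x)) μ := hcostT.sub hφT
  have hφγ : Integrable (fun p : α × β => φ p.2) γ := hγ.snd.integrable_comp_of_integrable hφ
  calc ∫ x, cost x (T x) ∂μ
      = ∫ x, (cost x (T x) - φ (T x)) ∂μ + ∫ x, φ (T x) ∂μ := by
        rw [integral_sub hcostT hφT, sub_add_cancel]
    _ = ∫ p, (cost p.1 (T p.1) - φ (T p.1)) ∂γ + ∫ x, φ (T x) ∂μ := by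
        rw [integral_comp_of_measurePreserving hγ.fst hreduced.aestronglyMeasurable]
    _ ≤ ∫ p, (cost p.1 p.2 - φ p.2) ∂γ + ∫ y, φ y ∂ν := by
        refine add_le_add (integral_mono_ae (hγ.fst.integrable_comp_of_integrable hreduced)
          (hcost.sub hφγ) ?_) hle
        filter_upwards [hγ.fst.quasiMeasurePreserving.ae hTopt] with p hp using hp p.2
    _ = ∫ p, cost p.1 p.2 ∂γ := by
        rw [integral_sub hcost hφγ, integral_comp_of_measurePreserving hγ.snd
          hφ.aestronglyMeasurable, sub_add_cancel]

end IsCoupling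

section TransportCost

variable {α : Type*} [MeasurableSpace α] {cost : α → α → ℝ} {μ ν : Measure α}

lemma le_transportCost [IsProbabilityMeasure μ] [IsProbabilityMeasure ν] {r : ℝ}
    (h : ∀ γ, IsCoupling γ μ ν → r ≤ ∫ p, cost p.1 p.2 ∂γ) : r ≤ transportCost cost μ ν := by
  have hprod : IsCoupling (μ.prod ν) μ ν := .prod
  refine le_csInf ⟨_, μ.prod ν, ⟨hprod.fst.map_eq, hprod.snd.map_eq⟩, rfl⟩ ?_
  rintro _ ⟨γ, ⟨hfst, hsnd⟩, rfl⟩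
  exact h γ ⟨⟨measurable_fst, hfst⟩, ⟨measurable_snd, hsnd⟩⟩

lemma transportCost_eq_of_forall_le {γ₀ : Measure (α × α)} (hγ₀ : IsCoupling γ₀ μ ν)
    (h : ∀ γ, IsCoupling γ μ ν → ∫ p, cost p.1 p.2 ∂γ₀ ≤ ∫ p, cost p.1 p.2 ∂γ) :
    transportCost cost μ ν = ∫ p, cost p.1 p.2 ∂γ₀ := by
  refine IsLeast.csInf_eq ⟨⟨γ₀, ⟨hγ₀.fst.map_eq, hγ₀.snd.map_eq⟩, rfl⟩, ?_⟩
  rintro _ ⟨γ, ⟨hfst, hsnd⟩, rfl⟩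
  exact h γ ⟨⟨measurable_fst, hfst⟩, ⟨measurable_snd, hsnd⟩⟩

end TransportCost

/-- The bound `‖cost x y‖ ≤ a x + b y` makes every coupling integral genuine: a non-integrable cost
would contribute the junk value `0` to the infimum defining `transportCost`. -/
theorem MK_projection_equality_constraint_general {α ι : Type*} [MeasurableSpace α] [Fintype ι]
    {Q : Measure α} [IsProbabilityMeasure Q] {cost : α → α → ℝ} {a b : α → ℝ}
    (hcost : Measurable fun p : α × α => cost p.1 p.2) (hle : ∀ x y, ‖cost x y‖ ≤ a x + b y)
    {Φ : α → ι → ℝ} {lam t : ι → ℝ} {T : α → α} (hT : AEMeasurable T Q)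
    (hTopt : ∀ᵐ y ∂Q, ∀ x,
      cost y (T y) - ∑ j, lam j * Φ (T y) j ≤ cost y x - ∑ j, lam j * Φ x j)
    (ha : Integrable a Q) (hbT : Integrable b (Q.map T))
    (hΦT : ∀ j, Integrable (fun x => Φ x j) (Q.map T)) (hfeas : ∀ j, ∫ y, Φ (T y) j ∂Q = t j) :
    (∀ j, ∫ x, Φ x j ∂(Q.map T) = t j) ∧
      transportCost cost Q (Q.map T) = ∫ y, cost y (T y) ∂Q ∧
      ∀ P : Measure α, IsProbabilityMeasure P → Integrable b P →
        (∀ j, Integrable (fun x => Φ x j) P) → (∀ j, ∫ x, Φ x j ∂P = t j) →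
        transportCost cost Q (Q.map T) ≤ transportCost cost Q P := by
  have hfeas_map (j) : ∫ x, Φ x j ∂(Q.map T) = t j :=
    (integral_map hT (hΦT j).aestronglyMeasurable).trans (hfeas j)
  have hgraph := IsCoupling.graph hT
  have hpair : AEMeasurable (fun y => (y, T y)) Q := aemeasurable_id.prodMk hT
  have hcostT : Integrable (fun y => cost y (T y)) Q :=
    (hgraph.integrable_of_norm_le_add hcost hle ha hbT).comp_aemeasurable hpair
  have hΦTQ (j) : Integrable (fun y => Φ (T y) j) Q := (hΦT j).comp_aemeasurable hT
  have hlower {P : Measure α} (hb : Integrable b P) (hΦ : ∀ j, Integrable (fun x => Φ x j) P)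
      (hPt : ∀ j, ∫ x, Φ x j ∂P = t j) (γ) (hγ : IsCoupling γ Q P) :
      ∫ y, cost y (T y) ∂Q ≤ ∫ p, cost p.1 p.2 ∂γ := by
    refine hγ.integral_cost_comp_le_integral_cost hTopt
      (hγ.integrable_of_norm_le_add hcost hle ha hb) hcostT
      (integrable_finsetSum _ fun j _ => (hΦTQ j).const_mul (lam j))
      (integrable_finsetSum _ fun j _ => (hΦ j).const_mul (lam j)) (le_of_eq ?_)
    simp_rw [integral_sum_const_mul lam hΦTQ, integral_sum_const_mul lam hΦ, hfeas, hPt]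
  have hgraph_cost : ∫ p, cost p.1 p.2 ∂(Q.map fun y => (y, T y)) = ∫ y, cost y (T y) ∂Q :=
    integral_map hpair hcost.aestronglyMeasurable
  have hvalue : transportCost cost Q (Q.map T) = ∫ y, cost y (T y) ∂Q :=
    (transportCost_eq_of_forall_le hgraph fun γ hγ =>
      hgraph_cost.trans_le (hlower hbT hΦT hfeas_map γ hγ)).trans hgraph_cost
  exact ⟨hfeas_map, hvalue, fun P _ hb hΦ hPt =>
    hvalue.trans_le (le_transportCost (hlower hb hΦ hPt))⟩

/-- if `T` realizes, at every `y`, the infimum of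
`x ↦ ‖x − y‖² − ⟨λ, Φ(x)⟩` over `E`, and `∫ Φ(T(y)) dQ(y) = t`, then the pushforward
`T#Q` satisfies the constraint `∫ Φ d(T#Q) = t`, its transport cost from `Q` equals
`∫ ‖T(y) − y‖² dQ(y)`, and `T#Q` minimizes the transport cost from `Q` among all
probability measures `P` on `E` with `∫ Φ dP = t`. -/
theorem MK_projection_equality_constraint (d k : ℕ)
    (E : Set (EuclideanSpace ℝ (Fin d))) (hE : IsCompact E)
    (Q : Measure E) (hQ : IsProbabilityMeasure Q)
    (Φ : E → Fin k → ℝ) (hΦ : Continuous Φ)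
    (lam t : Fin k → ℝ)
    (T : E → E) (hT : Measurable T)
    (hTopt : ∀ y : E,
      ‖(T y : EuclideanSpace ℝ (Fin d)) - (y : EuclideanSpace ℝ (Fin d))‖ ^ 2
          - ∑ j, lam j * Φ (T y) j
        = ⨅ x : E,
            (‖(x : EuclideanSpace ℝ (Fin d)) - (y : EuclideanSpace ℝ (Fin d))‖ ^ 2
              - ∑ j, lam j * Φ x j))
    (hfeas : ∀ j, ∫ y : E, Φ (T y) j ∂Q = t j) :
    (∀ j, ∫ x : E, Φ x j ∂(Q.map T) = t j) ∧
      transportCost (fun x y : E =>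
          ‖(x : EuclideanSpace ℝ (Fin d)) - (y : EuclideanSpace ℝ (Fin d))‖ ^ 2)
          Q (Q.map T)
        = ∫ y : E,
            ‖(T y : EuclideanSpace ℝ (Fin d)) - (y : EuclideanSpace ℝ (Fin d))‖ ^ 2 ∂Q ∧
      ∀ P : Measure E, IsProbabilityMeasure P → (∀ j, ∫ x : E, Φ x j ∂P = t j) →
        transportCost (fun x y : E =>
            ‖(x : EuclideanSpace ℝ (Fin d)) - (y : EuclideanSpace ℝ (Fin d))‖ ^ 2)
            Q (Q.map T)
          ≤ transportCost (fun x y : E =>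
              ‖(x : EuclideanSpace ℝ (Fin d)) - (y : EuclideanSpace ℝ (Fin d))‖ ^ 2)
              Q P := by
  have : CompactSpace E := isCompact_iff_compactSpace.mp hE
  have hcost : Continuous fun p : E × E => ‖(p.1 : EuclideanSpace ℝ (Fin d)) - p.2‖ ^ 2 := by
    fun_prop
  obtain ⟨C, hC⟩ := isCompact_univ.exists_bound_of_continuousOn hcost.continuousOn
  have hTmin (y x : E) := (hTopt y).trans_le <|
    ciInf_le (isCompact_range (by fun_prop)).bddBelow x
  have hΦ_int (P : Measure E) [IsFiniteMeasure P] (j) : Integrable (fun x => Φ x j) P :=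
    Continuous.integrable_of_hasCompactSupport (by fun_prop) (.of_compactSpace _)
  obtain ⟨hmean, hvalue, hopt⟩ := MK_projection_equality_constraint_general
    (cost := fun x y : E => ‖(x : EuclideanSpace ℝ (Fin d)) - y‖ ^ 2)
    hcost.measurable (fun x y => (hC (x, y) (Set.mem_univ _)).trans_eq (add_zero C).symm)
    hT.aemeasurable
    (.of_forall fun y x => by simpa only [norm_sub_rev] using hTmin y x) (integrable_const C)
    (integrable_const 0) (hΦ_int (Q.map T)) hfeas
  simp_rw [norm_sub_rev (T _ : EuclideanSpace ℝ (Fin d))]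
  exact ⟨hmean, hvalue, fun P hP => hopt P hP (integrable_const 0) (hΦ_int P)⟩
end

section
/- Let E be a compact subset of ℝ^d, Q a probability measure on E, Φ : E → ℝ^k a continuous map, t ∈ ℝ^k, and λ ∈ ℝ^k with all components nonnegative. Suppose T : E → E is a measurable map such that for every y ∈ E, ‖T(y) − y‖² − ⟨λ, Φ(T(y))⟩ = inf_{x ∈ E} (‖x − y‖² − ⟨λ, Φ(x)⟩). Suppose further that the feasibility and complementary slackness conditions hold: ∫_E Φ(T(y)) dQ(y) ≥ t componentwise, and ⟨λ, t − ∫_E Φ(T(y)) dQ(y)⟩ = 0. Then T#Q minimizes the transport cost from Q over the inequality-constrained set: for every probability measure P on E with ∫_E Φ dP ≥ t componentwise, TC(Q, P) ≥ TC(Q, T#Q), and TC(Q, T#Q) = ∫_E ‖T(y) − y‖² dQ(y). -/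
/-!
Lagrangian duality for optimal transport with cost `c`. Since `T y` minimizes
`x ↦ c y x - g x` for `g = ⟨λ, Φ⟩`, the functions `f y = c y (T y) - g (T y)` and `g` are
Kantorovich potentials, and `f y + g x = c y x` on the graph of `T`. Hence `T#Q` minimizes the
Lagrangian `P ↦ TC(Q, P) - ∫ g dP`, and `TC(Q, T#Q)` is attained by the plan carried by the graph.
Complementary slackness gives `∫ g d(T#Q) = ⟨λ, t⟩`, which is at most `∫ g dP` for every feasible
`P` because `λ ≥ 0`, so dropping the penalty preserves minimality.
-/

open MeasureTheory

section Couplings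

variable {α : Type*} [MeasurableSpace α] {μ ν : Measure α} {c : α → α → ℝ} {T : α → α}
  {f g : α → ℝ}

/-- The couplings (transport plans) of `μ` and `ν`, i.e. the set over which the infimum in
`transportCost` is taken. They are not required to be probability measures: the marginals force
the total mass. -/
def couplings (μ ν : Measure α) : Set (Measure (α × α)) :=
  {γ | γ.map Prod.fst = μ ∧ γ.map Prod.snd = ν}

theorem prod_mem_couplings [IsProbabilityMeasure μ] [IsProbabilityMeasure ν] :
    μ.prod ν ∈ couplings μ ν := by
  simp [couplings]

theorem map_graph_mem_couplings (hT : Measurable T) :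
    μ.map (fun x => (x, T x)) ∈ couplings μ (μ.map T) := by
  have hgraph : Measurable fun x => (x, T x) := measurable_id.prodMk hT
  exact ⟨(Measure.map_map measurable_fst hgraph).trans Measure.map_id,
    Measure.map_map measurable_snd hgraph⟩

theorem isFiniteMeasure_of_mem_couplings [IsFiniteMeasure μ] {γ : Measure (α × α)}
    (hγ : γ ∈ couplings μ ν) : IsFiniteMeasure γ := by
  obtain ⟨rfl, -⟩ := hγ
  exact Measure.isFiniteMeasure_of_map measurable_fst.aemeasurable

theorem integral_add_integral_le_of_mem_couplings (hf : Integrable f μ) (hg : Integrable g ν)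
    (hfg : ∀ x y, f x + g y ≤ c x y) {γ : Measure (α × α)} (hγ : γ ∈ couplings μ ν)
    (hc : Integrable (fun p : α × α => c p.1 p.2) γ) :
    ∫ x, f x ∂μ + ∫ y, g y ∂ν ≤ ∫ p, c p.1 p.2 ∂γ := by
  obtain ⟨rfl, rfl⟩ := hγ
  have hf' : Integrable (fun p : α × α => f p.1) γ := hf.comp_measurable measurable_fst
  have hg' : Integrable (fun p : α × α => g p.2) γ := hg.comp_measurable measurable_snd
  rw [integral_map measurable_fst.aemeasurable hf.aestronglyMeasurable,
    integral_map measurable_snd.aemeasurable hg.aestronglyMeasurable, ← integral_add hf' hg']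
  exact integral_mono (hf'.add hg') hc fun p => hfg p.1 p.2

theorem integral_add_integral_le_transportCost [IsProbabilityMeasure μ] [IsProbabilityMeasure ν]
    (hf : Integrable f μ) (hg : Integrable g ν) (hfg : ∀ x y, f x + g y ≤ c x y)
    (hc : ∀ γ ∈ couplings μ ν, Integrable (fun p : α × α => c p.1 p.2) γ) :
    ∫ x, f x ∂μ + ∫ y, g y ∂ν ≤ transportCost c μ ν := by
  refine le_csInf ⟨_, μ.prod ν, prod_mem_couplings, rfl⟩ ?_
  rintro _ ⟨γ, hγ, rfl⟩
  exact integral_add_integral_le_of_mem_couplings hf hg hfg hγ (hc γ hγ)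

theorem transportCost_map_eq_integral_of_potentials (hT : Measurable T) (hf : Integrable f μ)
    (hg : Integrable g (μ.map T)) (hfg : ∀ x y, f x + g y ≤ c x y)
    (hfgT : ∀ x, f x + g (T x) = c x (T x))
    (hc : ∀ γ ∈ couplings μ (μ.map T), Integrable (fun p : α × α => c p.1 p.2) γ) :
    transportCost c μ (μ.map T) = ∫ x, c x (T x) ∂μ := by
  have hgraph := map_graph_mem_couplings (μ := μ) hT
  refine IsLeast.csInf_eq ⟨⟨_, hgraph, ?_⟩, ?_⟩
  · exact integral_map (measurable_id.prodMk hT).aemeasurable (hc _ hgraph).aestronglyMeasurable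
  · rintro _ ⟨γ, hγ, rfl⟩
    calc ∫ x, c x (T x) ∂μ
        = ∫ x, f x ∂μ + ∫ y, g y ∂(μ.map T) := by
          have hgT : Integrable (fun x => g (T x)) μ := hg.comp_measurable hT
          rw [integral_map hT.aemeasurable hg.aestronglyMeasurable, ← integral_add hf hgT]
          simp only [hfgT]
      _ ≤ ∫ p, c p.1 p.2 ∂γ := integral_add_integral_le_of_mem_couplings hf hg hfg hγ (hc γ hγ)

theorem integrable_cost_graph (hT : Measurable T)
    (hc : ∀ γ ∈ couplings μ (μ.map T), Integrable (fun p : α × α => c p.1 p.2) γ) :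
    Integrable (fun x => c x (T x)) μ :=
  (hc _ (map_graph_mem_couplings hT)).comp_measurable (measurable_id.prodMk hT)

theorem transportCost_map_eq_integral (hT : Measurable T) (hg : Integrable g (μ.map T))
    (hmin : ∀ x y, c x (T x) - g (T x) ≤ c x y - g y)
    (hc : ∀ γ ∈ couplings μ (μ.map T), Integrable (fun p : α × α => c p.1 p.2) γ) :
    transportCost c μ (μ.map T) = ∫ x, c x (T x) ∂μ :=
  transportCost_map_eq_integral_of_potentials hT
    ((integrable_cost_graph hT hc).sub (hg.comp_measurable hT)) hg
    (fun x y => le_sub_iff_add_le.mp (hmin x y)) (fun _ => sub_add_cancel _ _) hc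

theorem transportCost_map_sub_integral_le [IsProbabilityMeasure μ] [IsProbabilityMeasure ν]
    (hT : Measurable T) (hgT : Integrable g (μ.map T)) (hg : Integrable g ν)
    (hmin : ∀ x y, c x (T x) - g (T x) ≤ c x y - g y)
    (hcT : ∀ γ ∈ couplings μ (μ.map T), Integrable (fun p : α × α => c p.1 p.2) γ)
    (hc : ∀ γ ∈ couplings μ ν, Integrable (fun p : α × α => c p.1 p.2) γ) :
    transportCost c μ (μ.map T) - ∫ y, g y ∂(μ.map T) ≤ transportCost c μ ν - ∫ y, g y ∂ν := by
  have hgraph := integrable_cost_graph hT hcT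
  have hcomp : Integrable (fun x => g (T x)) μ := hgT.comp_measurable hT
  rw [transportCost_map_eq_integral hT hgT hmin hcT,
    integral_map hT.aemeasurable hgT.aestronglyMeasurable, ← integral_sub hgraph hcomp]
  exact le_sub_iff_add_le.mpr <| integral_add_integral_le_transportCost (hgraph.sub hcomp) hg
    (fun x y => le_sub_iff_add_le.mp (hmin x y)) hc

end Couplings

section Compact

variable {X : Type*} [TopologicalSpace X] [CompactSpace X]

theorem le_of_eq_ciInf_of_continuous {f : X → ℝ} (hf : Continuous f) {a : ℝ}
    (ha : a = ⨅ x, f x) (x : X) : a ≤ f x :=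
  ha.trans_le (ciInf_le (isCompact_range hf).bddBelow x)

variable [MeasurableSpace X] [OpensMeasurableSpace X]

theorem integrable_of_continuous {f : X → ℝ} (hf : Continuous f) (μ : Measure X)
    [IsFiniteMeasure μ] : Integrable f μ :=
  hf.integrable_of_hasCompactSupport (HasCompactSupport.of_compactSpace f)

theorem integrable_of_continuous_of_mem_couplings [SecondCountableTopology X] {μ ν : Measure X}
    [IsFiniteMeasure μ] {f : X × X → ℝ} (hf : Continuous f) {γ : Measure (X × X)}
    (hγ : γ ∈ couplings μ ν) : Integrable f γ :=
  have := isFiniteMeasure_of_mem_couplings hγ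
  integrable_of_continuous hf γ

end Compact

theorem sum_mul_le_sum_mul_of_slackness {ι : Type*} [Fintype ι] {lam t m p : ι → ℝ}
    (hlam : ∀ j, 0 ≤ lam j) (hcs : ∑ j, lam j * (t j - m j) = 0) (hp : ∀ j, t j ≤ p j) :
    ∑ j, lam j * m j ≤ ∑ j, lam j * p j :=
  calc ∑ j, lam j * m j = ∑ j, lam j * t j := by
        simp only [mul_sub, Finset.sum_sub_distrib] at hcs
        linarith
    _ ≤ ∑ j, lam j * p j :=
        Finset.sum_le_sum fun j _ => mul_le_mul_of_nonneg_left (hp j) (hlam j)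

section Lagrangian

variable {α ι : Type*} [MeasurableSpace α] [Fintype ι] {Φ : α → ι → ℝ} {t lam : ι → ℝ}

theorem integrable_sum_mul (lam : ι → ℝ) {μ : Measure α}
    (hΦ : ∀ j, Integrable (fun x => Φ x j) μ) : Integrable (fun x => ∑ j, lam j * Φ x j) μ :=
  integrable_finsetSum _ fun j _ => (hΦ j).const_mul _

theorem integral_sum_mul (lam : ι → ℝ) {μ : Measure α}
    (hΦ : ∀ j, Integrable (fun x => Φ x j) μ) :
    ∫ x, ∑ j, lam j * Φ x j ∂μ = ∑ j, lam j * ∫ x, Φ x j ∂μ := by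
  rw [integral_finsetSum _ fun j _ => (hΦ j).const_mul _]
  simp only [integral_const_mul]

theorem MK_projection_inequality_constraint_general {c : α → α → ℝ} {Q : Measure α}
    [IsProbabilityMeasure Q] (hlam : ∀ j, 0 ≤ lam j) {T : α → α} (hT : Measurable T)
    (hΦT : ∀ j, Integrable (fun x => Φ x j) (Q.map T))
    (hcT : ∀ γ ∈ couplings Q (Q.map T), Integrable (fun p : α × α => c p.1 p.2) γ)
    (hmin : ∀ y x, c y (T y) - ∑ j, lam j * Φ (T y) j ≤ c y x - ∑ j, lam j * Φ x j)
    (hcs : ∑ j, lam j * (t j - ∫ y, Φ (T y) j ∂Q) = 0) :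
    (∀ P : Measure α, IsProbabilityMeasure P → (∀ j, Integrable (fun x => Φ x j) P) →
        (∀ γ ∈ couplings Q P, Integrable (fun p : α × α => c p.1 p.2) γ) →
        (∀ j, t j ≤ ∫ x, Φ x j ∂P) →
        transportCost c Q (Q.map T) ≤ transportCost c Q P) ∧
      transportCost c Q (Q.map T) = ∫ y, c y (T y) ∂Q := by
  have hgT := integrable_sum_mul lam hΦT
  refine ⟨fun P _ hΦP hcP hPt => ?_, transportCost_map_eq_integral hT hgT hmin hcT⟩
  have hLagrangian :=
    transportCost_map_sub_integral_le hT hgT (integrable_sum_mul lam hΦP) hmin hcT hcP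
  have hpenalty : ∫ x, ∑ j, lam j * Φ x j ∂(Q.map T) ≤ ∫ x, ∑ j, lam j * Φ x j ∂P := by
    rw [integral_sum_mul lam hΦT, integral_sum_mul lam hΦP]
    simp only [integral_map hT.aemeasurable (hΦT _).aestronglyMeasurable]
    exact sum_mul_le_sum_mul_of_slackness hlam hcs hPt
  linarith

end Lagrangian

/-- with `λ ≥ 0` componentwise, if `T` realizes at every `y` the infimum of
`x ↦ ‖x − y‖² − ⟨λ, Φ(x)⟩` over `E`, and the feasibility (`∫ Φ(T(y)) dQ ≥ t`
componentwise) and complementary slackness (`⟨λ, t − ∫ Φ(T(y)) dQ⟩ = 0`) conditions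
hold, then `T#Q` minimizes the transport cost from `Q` among all probability measures
`P` on `E` with `∫ Φ dP ≥ t` componentwise, and its transport cost from `Q` equals
`∫ ‖T(y) − y‖² dQ(y)`. -/
theorem MK_projection_inequality_constraint (d k : ℕ)
    (E : Set (EuclideanSpace ℝ (Fin d))) (hE : IsCompact E)
    (Q : Measure E) (hQ : IsProbabilityMeasure Q)
    (Φ : E → Fin k → ℝ) (hΦ : Continuous Φ)
    (t lam : Fin k → ℝ) (hlam : ∀ j, 0 ≤ lam j)
    (T : E → E) (hT : Measurable T)
    (hTopt : ∀ y : E,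
      ‖(T y : EuclideanSpace ℝ (Fin d)) - (y : EuclideanSpace ℝ (Fin d))‖ ^ 2
          - ∑ j, lam j * Φ (T y) j
        = ⨅ x : E,
            (‖(x : EuclideanSpace ℝ (Fin d)) - (y : EuclideanSpace ℝ (Fin d))‖ ^ 2
              - ∑ j, lam j * Φ x j))
    (hfeas : ∀ j, t j ≤ ∫ y : E, Φ (T y) j ∂Q)
    (hcs : ∑ j, lam j * (t j - ∫ y : E, Φ (T y) j ∂Q) = 0) :
    (∀ P : Measure E, IsProbabilityMeasure P → (∀ j, t j ≤ ∫ x : E, Φ x j ∂P) →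
        transportCost (fun x y : E =>
            ‖(x : EuclideanSpace ℝ (Fin d)) - (y : EuclideanSpace ℝ (Fin d))‖ ^ 2)
            Q (Q.map T)
          ≤ transportCost (fun x y : E =>
              ‖(x : EuclideanSpace ℝ (Fin d)) - (y : EuclideanSpace ℝ (Fin d))‖ ^ 2)
              Q P) ∧
      transportCost (fun x y : E =>
          ‖(x : EuclideanSpace ℝ (Fin d)) - (y : EuclideanSpace ℝ (Fin d))‖ ^ 2)
          Q (Q.map T)
        = ∫ y : E,
            ‖(T y : EuclideanSpace ℝ (Fin d)) - (y : EuclideanSpace ℝ (Fin d))‖ ^ 2 ∂Q := by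
  have : CompactSpace E := isCompact_iff_compactSpace.mp hE
  have hcost : Continuous fun p : E × E =>
      ‖(p.1 : EuclideanSpace ℝ (Fin d)) - (p.2 : EuclideanSpace ℝ (Fin d))‖ ^ 2 := by fun_prop
  have hΦint (P : Measure E) [IsFiniteMeasure P] (j : Fin k) : Integrable (fun x => Φ x j) P :=
    integrable_of_continuous (by fun_prop) P
  have hmin (y x : E) := le_of_eq_ciInf_of_continuous (by fun_prop) (hTopt y) x
  obtain ⟨hle, heq⟩ := MK_projection_inequality_constraint_general
    (c := fun x y : E => ‖(x : EuclideanSpace ℝ (Fin d)) - y‖ ^ 2) hlam hT (hΦint _)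
    (fun _ => integrable_of_continuous_of_mem_couplings hcost)
    (fun y x => by simpa only [norm_sub_rev] using hmin y x) hcs
  exact ⟨fun P _ hPt => hle P ‹_› (hΦint P)
      (fun _ => integrable_of_continuous_of_mem_couplings hcost) hPt,
    by simpa only [norm_sub_rev] using heq⟩
end
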